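/- Classical inf-sup bound for the quasi-optimality constant: let P : V → S be the linear map determined by b(P v, σ) = ⟪v, E σ⟫ for all v ∈ V, σ ∈ S, and assume b(u, σ) = ⟪u, E σ⟫ for all u ∈ S ∩ V, σ ∈ S. Set C_β := sup { ⟪v, E σ⟫ + b(s,σ) : v ∈ V, s ∈ S, σ ∈ S, ‖v + s‖ = 1, ‖σ‖ = 1 } and β := inf_{s ∈ S, ‖s‖ = 1} sup_{σ ∈ S, ‖σ‖ = 1} b(s,σ). Then the quasi-optimality constant satisfies Cqopt ≤ C_β / β. -/

import Mathlib

open scoped RealInnerProductSpace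

section UnitSphere

variable {F : Type*} [NormedAddCommGroup F] [NormedSpace ℝ F] [FiniteDimensional ℝ F]

/-- A linear functional on a finite-dimensional space is bounded above on the unit sphere. -/
theorem LinearMap.bddAbove_unitSphere (φ : F →ₗ[ℝ] ℝ) :
    BddAbove {c : ℝ | ∃ σ : F, ‖σ‖ = 1 ∧ c = φ σ} := by
  refine ⟨‖LinearMap.toContinuousLinearMap φ‖, ?_⟩
  rintro c ⟨σ, hσ, rfl⟩
  have h := (LinearMap.toContinuousLinearMap φ).le_opNorm σ
  rw [hσ, mul_one] at h
  exact (le_abs_self _).trans h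

/-- The supremum of a linear functional over the unit sphere dominates its operator norm. -/
theorem LinearMap.norm_le_sSup_unitSphere [Nontrivial F] (φ : F →ₗ[ℝ] ℝ) :
    ‖LinearMap.toContinuousLinearMap φ‖ ≤ sSup {c : ℝ | ∃ σ : F, ‖σ‖ = 1 ∧ c = φ σ} := by
  have hle : ∀ σ : F, ‖σ‖ = 1 → φ σ ≤ sSup {c : ℝ | ∃ σ : F, ‖σ‖ = 1 ∧ c = φ σ} :=
    fun σ hσ => le_csSup φ.bddAbove_unitSphere ⟨σ, hσ, rfl⟩
  have habs : ∀ σ : F, ‖σ‖ = 1 → |φ σ| ≤ sSup {c : ℝ | ∃ σ : F, ‖σ‖ = 1 ∧ c = φ σ} := by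
    intro σ hσ
    refine abs_le'.2 ⟨hle σ hσ, ?_⟩
    simpa using hle (-σ) (by simpa using hσ)
  obtain ⟨e, he⟩ := exists_norm_eq F (zero_le_one' ℝ)
  exact ContinuousLinearMap.opNorm_le_of_unit_norm ((abs_nonneg _).trans (habs e he)) habs

/-- The inf-sup constant of a nondegenerate bilinear form on a nontrivial finite-dimensional
space is positive. -/
theorem LinearMap.infSup_pos [Nontrivial F] (b : F →ₗ[ℝ] F →ₗ[ℝ] ℝ)
    (hb : ∀ s : F, (∀ σ : F, b s σ = 0) → s = 0) :
    0 < sInf {r : ℝ | ∃ s : F, ‖s‖ = 1 ∧ r = sSup {c : ℝ | ∃ σ : F, ‖σ‖ = 1 ∧ c = b s σ}} := by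
  let B : F →ₗ[ℝ] (F →L[ℝ] ℝ) := (LinearMap.toContinuousLinearMap : _ ≃ₗ[ℝ] _).toLinearMap ∘ₗ b
  have hker : LinearMap.ker B = ⊥ := by
    refine LinearMap.ker_eq_bot'.2 fun s hs => hb s fun σ => ?_
    exact congrArg (fun f : F →L[ℝ] ℝ => f σ) hs
  obtain ⟨K, hK, hanti⟩ := B.exists_antilipschitzWith hker
  obtain ⟨e, he⟩ := exists_norm_eq F (zero_le_one' ℝ)
  refine lt_of_lt_of_le (inv_pos.2 (NNReal.coe_pos.2 hK)) (le_csInf ⟨_, e, he, rfl⟩ ?_)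
  rintro r ⟨s, hs, rfl⟩
  refine le_trans ?_ (b s).norm_le_sSup_unitSphere
  have h := hanti.le_mul_dist s 0
  rw [dist_zero_right, map_zero, dist_zero_right, hs] at h
  exact (inv_le_iff_one_le_mul₀' (NNReal.coe_pos.2 hK)).2 h

/-- The inf-sup constant is a lower bound for the suprema over unit vectors. -/
theorem LinearMap.infSup_le [Nontrivial F] (b : F →ₗ[ℝ] F →ₗ[ℝ] ℝ) {s : F} (hs : ‖s‖ = 1) :
    sInf {r : ℝ | ∃ s : F, ‖s‖ = 1 ∧ r = sSup {c : ℝ | ∃ σ : F, ‖σ‖ = 1 ∧ c = b s σ}} ≤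
      sSup {c : ℝ | ∃ σ : F, ‖σ‖ = 1 ∧ c = b s σ} := by
  refine csInf_le ⟨0, ?_⟩ ⟨s, hs, rfl⟩
  rintro r ⟨t, -, rfl⟩
  exact (norm_nonneg _).trans (b t).norm_le_sSup_unitSphere

/-- A bilinear form on a finite-dimensional space is bounded. -/
theorem LinearMap.exists_bound_of_finiteDimensional (b : F →ₗ[ℝ] F →ₗ[ℝ] ℝ) :
    ∃ N : ℝ, 0 ≤ N ∧ ∀ s σ : F, |b s σ| ≤ N * ‖s‖ * ‖σ‖ := by
  let B : F →L[ℝ] (F →L[ℝ] ℝ) := LinearMap.toContinuousLinearMap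
    ((LinearMap.toContinuousLinearMap : _ ≃ₗ[ℝ] _).toLinearMap ∘ₗ b)
  exact ⟨‖B‖, B.opNorm_nonneg, B.le_opNorm₂⟩

end UnitSphere

/-- Exchanging the lengths of two nonzero vectors does not change the norm of their sum. -/
theorem norm_smul_add_inv_smul_eq {X : Type*} [NormedAddCommGroup X] [InnerProductSpace ℝ X]
    {p q : X} (hp : p ≠ 0) (hq : q ≠ 0) :
    ‖(‖q‖ / ‖p‖) • p + (‖q‖ / ‖p‖)⁻¹ • q‖ = ‖p + q‖ := by
  have hp' : ‖p‖ ≠ 0 := norm_ne_zero_iff.2 hp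
  have hq' : ‖q‖ ≠ 0 := norm_ne_zero_iff.2 hq
  rw [← sq_eq_sq₀ (norm_nonneg _) (norm_nonneg _), norm_add_sq_real, norm_add_sq_real,
    norm_smul, norm_smul, real_inner_smul_left, real_inner_smul_right, norm_inv, norm_div,
    norm_norm, norm_norm]
  field_simp
  ring

section Projection

variable {X : Type*} [NormedAddCommGroup X] [InnerProductSpace ℝ X] {V S : Submodule ℝ X}

/-- If the extension `v + s ↦ P v + s` of `P` is bounded by `M`, then so is the complementary
map `v + s ↦ v - P v`. -/
theorem norm_sub_le_of_norm_add_le [Nontrivial S] (P : V →ₗ[ℝ] S) {M : ℝ}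
    (hM : ∀ (v : V) (s : S), ‖P v + s‖ ≤ M * ‖(v : X) + (s : X)‖) (v : V) (s : S) :
    ‖(v : X) - (P v : X)‖ ≤ M * ‖(v : X) + (s : X)‖ := by
  have hM1 : 1 ≤ M := by
    obtain ⟨e, he⟩ := exists_norm_eq S (zero_le_one' ℝ)
    have h := hM 0 e
    have he' : ‖(e : X)‖ = 1 := he
    simpa [he'] using h
  rcases eq_or_ne ((v : X) - (P v : X)) 0 with hq | hq
  · rw [hq, norm_zero]
    positivity
  rcases eq_or_ne ((P v : X) + (s : X)) 0 with hp | hp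
  · rw [show (s : X) = -(P v : X) from (neg_eq_of_add_eq_zero_right hp).symm, ← sub_eq_add_neg]
    exact le_mul_of_one_le_left (norm_nonneg _) hM1
  have hswap := norm_smul_add_inv_smul_eq hp hq
  set a : ℝ := ‖(v : X) - (P v : X)‖ / ‖(P v : X) + (s : X)‖ with ha
  have h := hM (a⁻¹ • v) (a • (P v + s) - a⁻¹ • P v)
  have hleft : ‖P (a⁻¹ • v) + (a • (P v + s) - a⁻¹ • P v)‖ = ‖(v : X) - (P v : X)‖ := by
    rw [map_smul, add_sub_cancel, norm_smul, ha, norm_div, norm_norm, norm_norm]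
    exact div_mul_cancel₀ _ (norm_ne_zero_iff.2 hp)
  have hright : ((a⁻¹ • v : V) : X) + ((a • (P v + s) - a⁻¹ • P v : S) : X) =
      a • ((P v : X) + (s : X)) + a⁻¹ • ((v : X) - (P v : X)) := by
    push_cast
    module
  rw [hleft, hright, hswap] at h
  convert h using 3
  abel

/-- Quasi-optimality of `P` bounds its extension `v + s ↦ P v + s`. -/
theorem norm_add_le_of_quasiOptimal (P : V →ₗ[ℝ] S) {C : ℝ}
    (hC : ∀ v : V, ‖(v : X) - (P v : X)‖ ≤ C * Metric.infDist (v : X) (S : Set X))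
    (v : V) (s : S) : ‖P v + s‖ ≤ (1 + |C|) * ‖(v : X) + (s : X)‖ := by
  have hdist : Metric.infDist (v : X) (S : Set X) ≤ ‖(v : X) + (s : X)‖ := by
    have h := Metric.infDist_le_dist_of_mem (x := (v : X)) (S.neg_mem s.2)
    rwa [dist_eq_norm, sub_neg_eq_add] at h
  have hsub : ‖(v : X) - (P v : X)‖ ≤ |C| * ‖(v : X) + (s : X)‖ :=
    (hC v).trans (mul_le_mul (le_abs_self C) hdist Metric.infDist_nonneg (abs_nonneg C))
  calc ‖P v + s‖ = ‖((v : X) + (s : X)) - ((v : X) - (P v : X))‖ := by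
        rw [Submodule.coe_norm, Submodule.coe_add]
        congr 1
        abel
    _ ≤ ‖(v : X) + (s : X)‖ + ‖(v : X) - (P v : X)‖ := norm_sub_le _ _
    _ ≤ (1 + |C|) * ‖(v : X) + (s : X)‖ := by linarith

/-- If `v + s ↦ P v + s` is bounded, then so is the form `b (P v + s) σ` over `‖v + s‖ = 1`,
`‖σ‖ = 1`. -/
theorem bddAbove_extended_form [FiniteDimensional ℝ S] (b : S →ₗ[ℝ] S →ₗ[ℝ] ℝ) (P : V →ₗ[ℝ] S)
    {K : ℝ} (hK : ∀ (v : V) (s : S), ‖P v + s‖ ≤ K * ‖(v : X) + (s : X)‖) :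
    BddAbove {c : ℝ | ∃ (v : V) (s : S) (σ : S),
      ‖(v : X) + (s : X)‖ = 1 ∧ ‖σ‖ = 1 ∧ c = b (P v + s) σ} := by
  obtain ⟨N, hN, hbound⟩ := b.exists_bound_of_finiteDimensional
  refine ⟨N * K, ?_⟩
  rintro c ⟨v, s, σ, hx, hσ, rfl⟩
  have h := hbound (P v + s) σ
  rw [hσ, mul_one] at h
  have hp := hK v s
  rw [hx, mul_one] at hp
  exact (le_abs_self _).trans (h.trans (mul_le_mul_of_nonneg_left hp hN))

end Projection

/-- **Classical inf-sup bound for the quasi-optimality constant.** Let `P : V → S` be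
determined by `b(P v, σ) = ⟪v, E σ⟫`, and assume `b(u, σ) = ⟪u, E σ⟫` for all
`u ∈ S ∩ V`, `σ ∈ S`. With the continuity constant
`C_β := sup {⟪v, E σ⟫ + b(s,σ) : ‖v + s‖ = 1, ‖σ‖ = 1}` and the inf-sup constant
`β := inf_{‖s‖=1} sup_{‖σ‖=1} b(s,σ)`, the quasi-optimality constant satisfies
`Cqopt ≤ C_β / β`. -/
theorem quasiOptimality_constant_le_classical_bound
    {X : Type*} [NormedAddCommGroup X] [InnerProductSpace ℝ X] [CompleteSpace X]
    (V S : Submodule ℝ X) [CompleteSpace V] [FiniteDimensional ℝ S]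
    (hSne : S ≠ ⊥) (hsum : V ⊔ S = ⊤)
    (b : S →ₗ[ℝ] S →ₗ[ℝ] ℝ) (hb : ∀ s : S, (∀ σ : S, b s σ = 0) → s = 0)
    (E : S →ₗ[ℝ] V)
    (P : V →ₗ[ℝ] S)
    (hP : ∀ (v : V) (σ : S), b (P v) σ = ⟪(v : X), ((E σ : V) : X)⟫)
    (hcons : ∀ u : S, (u : X) ∈ V → ∀ σ : S, b u σ = ⟪(u : X), ((E σ : V) : X)⟫)
    (Cβ : ℝ)
    (hCβ : Cβ = sSup {c : ℝ | ∃ (v : V) (s : S) (σ : S),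
        ‖(v : X) + (s : X)‖ = 1 ∧ ‖σ‖ = 1 ∧ c = ⟪(v : X), ((E σ : V) : X)⟫ + b s σ})
    (β : ℝ)
    (hβ : β = sInf {r : ℝ | ∃ s : S, ‖s‖ = 1 ∧
        r = sSup {c : ℝ | ∃ σ : S, ‖σ‖ = 1 ∧ c = b s σ}})
    (Cqopt : ℝ)
    (hCqopt : IsLeast {C : ℝ | ∀ v : V,
        ‖(v : X) - (P v : X)‖ ≤ C * Metric.infDist (v : X) (S : Set X)} Cqopt) :
    Cqopt ≤ Cβ / β := by
  have : Nontrivial S := Submodule.nontrivial_iff_ne_bot.2 hSne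
  have hβpos : 0 < β := hβ ▸ b.infSup_pos hb
  have hform : ∀ (v : V) (s σ : S),
      ⟪(v : X), ((E σ : V) : X)⟫ + b s σ = b (P v + s) σ := by
    intro v s σ
    rw [map_add, LinearMap.add_apply, hP]
  simp only [hform] at hCβ
  have hK := norm_add_le_of_quasiOptimal P hCqopt.1
  have hform_le : ∀ (v : V) (s σ : S), ‖(v : X) + (s : X)‖ = 1 → ‖σ‖ = 1 →
      b (P v + s) σ ≤ Cβ := fun v s σ hx hσ =>
    hCβ ▸ le_csSup (bddAbove_extended_form b P hK) ⟨v, s, σ, hx, hσ, rfl⟩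
  have hM : ∀ (v : V) (s : S), ‖P v + s‖ ≤ Cβ / β * ‖(v : X) + (s : X)‖ := by
    intro v s
    rcases eq_or_ne (P v + s) 0 with hp | hp
    · have hCβ_nonneg : ‖(v : X) + (s : X)‖ ≠ 0 → 0 ≤ Cβ := by
        intro hx
        obtain ⟨e, he⟩ := exists_norm_eq S (zero_le_one' ℝ)
        have h := hform_le (‖(v : X) + (s : X)‖⁻¹ • v) (‖(v : X) + (s : X)‖⁻¹ • s) e
          (by push_cast; rw [← smul_add, norm_smul, norm_inv, norm_norm, inv_mul_cancel₀ hx]) he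
        rwa [map_smul, ← smul_add, hp, smul_zero, map_zero, LinearMap.zero_apply] at h
      rw [hp, norm_zero]
      rcases eq_or_ne ‖(v : X) + (s : X)‖ 0 with hx | hx
      · rw [hx, mul_zero]
      · exact mul_nonneg (div_nonneg (hCβ_nonneg hx) hβpos.le) (norm_nonneg _)
    have hp' : 0 < ‖P v + s‖ := norm_pos_iff.2 hp
    have hx : 0 < ‖(v : X) + (s : X)‖ :=
      pos_of_mul_pos_right (hp'.trans_le (hK v s)) (by positivity)
    have hunit : ‖(‖P v + s‖⁻¹ • (P v + s) : S)‖ = 1 := by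
      rw [norm_smul, norm_inv, norm_norm, inv_mul_cancel₀ hp'.ne']
    have hβle : β ≤ ‖P v + s‖⁻¹ * (‖(v : X) + (s : X)‖ * Cβ) := by
      rw [hβ]
      refine (b.infSup_le hunit).trans (csSup_le ⟨_, _, hunit, rfl⟩ ?_)
      rintro c ⟨σ, hσ, rfl⟩
      have h := hform_le (‖(v : X) + (s : X)‖⁻¹ • v) (‖(v : X) + (s : X)‖⁻¹ • s) σ
        (by push_cast; rw [← smul_add, norm_smul, norm_inv, norm_norm, inv_mul_cancel₀ hx.ne']) hσ
      rw [map_smul, ← smul_add, map_smul, LinearMap.smul_apply, smul_eq_mul,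
        inv_mul_le_iff₀ hx] at h
      rw [map_smul, LinearMap.smul_apply, smul_eq_mul]
      exact mul_le_mul_of_nonneg_left h (inv_nonneg.2 hp'.le)
    rw [le_inv_mul_iff₀ hp'] at hβle
    rw [div_mul_eq_mul_div, le_div_iff₀ hβpos]
    linarith
  refine hCqopt.2 fun v => ?_
  have hMpos : 0 < Cβ / β := by
    obtain ⟨e, he⟩ := exists_norm_eq S (zero_le_one' ℝ)
    have h := hM 0 e
    have he' : ‖(e : X)‖ = 1 := he
    simp only [map_zero, zero_add, he, Submodule.coe_zero, he', mul_one] at h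
    linarith
  rw [← div_le_iff₀' hMpos, Metric.le_infDist ⟨0, S.zero_mem⟩]
  intro s hs
  rw [div_le_iff₀' hMpos, dist_eq_norm, sub_eq_add_neg (v : X) s]
  exact norm_sub_le_of_norm_add_le P hM v ⟨-s, S.neg_mem hs⟩
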